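/- arXiv:1906.05515 — 2 statements merged into one kernel-verified Lean document; each statement's English description precedes it below -/
import Mathlib

section
/- Let M be a monoid and let M¹ denote the monoid obtained from M by adjoining a new identity element (whether or not M already has one). Then M is right coherent if and only if M¹ is right coherent. -/
def IsRightCongruence {M : Type*} [Monoid M] (r : M → M → Prop) : Prop :=
  Equivalence r ∧ ∀ a b c : M, r a b → r (a * c) (b * c)

def RCongGenBy {M : Type*} [Monoid M] (H : Set (M × M)) (r : M → M → Prop) : Prop :=
  IsRightCongruence r ∧ (∀ p ∈ H, r p.1 p.2) ∧
    ∀ r' : M → M → Prop, IsRightCongruence r' → (∀ p ∈ H, r' p.1 p.2) →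
      ∀ x y : M, r x y → r' x y

def FGRightCongruence {M : Type*} [Monoid M] (r : M → M → Prop) : Prop :=
  ∃ H : Set (M × M), H.Finite ∧ RCongGenBy H r

def RightCoherent (M : Type*) [Monoid M] : Prop :=
  ∀ r : M → M → Prop, FGRightCongruence r → ∀ a b : M,
    (∃ C : Finset M,
      {x : M | (∃ s : M, r x (a * s)) ∧ (∃ t : M, r x (b * t))} =
        ⋃ c ∈ C, {x : M | ∃ s : M, r x (c * s)}) ∧
    FGRightCongruence (fun u v : M => r (a * u) (a * v))

theorem wo_cases {M : Type*} {P : WithOne M → Prop} (x : WithOne M)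
    (one : P 1) (coe : ∀ m : M, P m) : P x := WithOne.cases_on x one coe

/-- The retraction of `WithOne M` onto `M`. -/
def retr (M : Type*) [Monoid M] : WithOne M →* M := WithOne.lift (MulHom.id M)

theorem retr_coe {M : Type*} [Monoid M] (m : M) : retr M (m : WithOne M) = m := rfl

theorem coe_one_mul' {M : Type*} [Monoid M] (s : WithOne M) :
    ((1 : M) : WithOne M) * s = (retr M s : M) := by
  induction s using wo_cases with
  | one => simp
  | coe m => rw [← WithOne.coe_mul, one_mul, retr_coe]

theorem mul_coe_one' {M : Type*} [Monoid M] (s : WithOne M) :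
    s * ((1 : M) : WithOne M) = (retr M s : M) := by
  induction s using wo_cases with
  | one => simp
  | coe m => rw [← WithOne.coe_mul, mul_one, retr_coe]

theorem coe_mul' {M : Type*} [Monoid M] (m : M) (s : WithOne M) :
    (m : WithOne M) * s = ((m * retr M s : M) : WithOne M) := by
  rw [WithOne.coe_mul, ← coe_one_mul', ← mul_assoc, ← WithOne.coe_mul, mul_one]

theorem pull_cong {M : Type*} [Monoid M] {r : M → M → Prop} (h : IsRightCongruence r) :
    IsRightCongruence (fun x y : WithOne M => r (retr M x) (retr M y)) := by
  refine ⟨⟨fun x => h.1.refl _, fun k => h.1.symm k, fun k l => h.1.trans k l⟩, ?_⟩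
  intro a b c k
  simpa only [map_mul] using h.2 _ _ _ k

theorem restr_cong {M : Type*} [Monoid M] {r : WithOne M → WithOne M → Prop}
    (h : IsRightCongruence r) : IsRightCongruence (fun x y : M => r x y) := by
  refine ⟨⟨fun x => h.1.refl _, fun k => h.1.symm k, fun k l => h.1.trans k l⟩, ?_⟩
  intro a b c k
  simpa only [WithOne.coe_mul] using h.2 _ _ (c : WithOne M) k

theorem restr_fg {M : Type*} [Monoid M] {r : WithOne M → WithOne M → Prop}
    (h : FGRightCongruence r) : FGRightCongruence (fun x y : M => r x y) := by
  obtain ⟨H, hf, hc, hH, hmin⟩ := h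
  refine ⟨Set.image (fun p => (retr M p.1, retr M p.2)) H, hf.image _, restr_cong hc, ?_, ?_⟩
  · rintro _ ⟨p, hp, rfl⟩
    have := hc.2 _ _ ((1 : M) : WithOne M) (hH p hp)
    simpa only [mul_coe_one'] using this
  · intro r' hr' hK x y hxy
    exact hmin _ (pull_cong hr') (fun p hp => hK _ ⟨p, hp, rfl⟩) _ _ hxy

theorem pull_fg {M : Type*} [Monoid M] {r : M → M → Prop} (h : FGRightCongruence r) :
    FGRightCongruence (fun x y : WithOne M => r (retr M x) (retr M y)) := by
  obtain ⟨H, hf, hc, hH, hmin⟩ := h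
  refine ⟨insert (1, ((1 : M) : WithOne M))
    (Set.image (fun p : M × M => ((p.1 : WithOne M), (p.2 : WithOne M))) H),
    (hf.image _).insert _, pull_cong hc, ?_, ?_⟩
  · rintro _ (rfl | ⟨p, hp, rfl⟩)
    · simpa only [map_one, retr_coe] using hc.1.refl _
    · exact hH p hp
  · intro r' hr' hK x y hxy
    have h1 : ∀ s : WithOne M, r' s (retr M s : M) := fun s => by
      have := hr'.2 _ _ s (hK _ (Set.mem_insert _ _))
      simpa only [one_mul, coe_one_mul'] using this
    have h2 := hmin _ (restr_cong hr') (fun p hp => hK _ (Set.mem_insert_of_mem _ ⟨p, hp, rfl⟩))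
      _ _ hxy
    exact hr'.1.trans (h1 x) (hr'.1.trans h2 (hr'.1.symm (h1 y)))

theorem fg_cong {M : Type*} [Monoid M] {r : M → M → Prop} (h : FGRightCongruence r) :
    IsRightCongruence r := by
  obtain ⟨H, hf, hc, _⟩ := h
  exact hc

theorem restr_retr {M : Type*} [Monoid M] {r : WithOne M → WithOne M → Prop}
    (h : IsRightCongruence r) {x y : WithOne M} (k : r x y) :
    r (retr M x : M) (retr M y : M) := by
  simpa only [mul_coe_one'] using h.2 _ _ ((1 : M) : WithOne M) k

theorem stmt7 {M : Type*} [Monoid M] :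
    RightCoherent M ↔ RightCoherent (WithOne M) := by
  classical
  constructor
  · intro hM r hr a b
    have hc := fg_cong hr
    have htriv : ∀ x : WithOne M, ∃ s : WithOne M, r x (1 * s) :=
      fun x => ⟨x, by rw [one_mul]; exact hc.1.refl _⟩
    constructor
    · induction a using wo_cases with
      | one => exact ⟨{b}, by ext x; simpa using fun _ _ => htriv x⟩
      | coe a =>
        induction b using wo_cases with
        | one => exact ⟨{(a : WithOne M)}, by ext x; simpa using fun _ _ => htriv x⟩
        | coe b =>
          obtain ⟨C, hC⟩ := (hM _ (restr_fg hr) a b).1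
          have hC' := fun x => Set.ext_iff.1 hC x
          simp only [Set.mem_ofPred_eq, Set.mem_iUnion, exists_prop] at hC'
          refine ⟨C.image (fun m : M => (m : WithOne M)), ?_⟩
          ext x
          simp only [Set.mem_ofPred_eq, Set.mem_iUnion, exists_prop, Finset.mem_image]
          constructor
          · rintro ⟨⟨s, hs⟩, ⟨t, ht⟩⟩
            rw [coe_mul'] at hs ht
            obtain ⟨c, hcC, u, hu⟩ := (hC' (a * retr M s)).1
              ⟨⟨_, hc.1.refl _⟩, ⟨_, hc.1.trans (hc.1.symm hs) ht⟩⟩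
            exact ⟨c, ⟨c, hcC, rfl⟩, u, hc.1.trans hs (by simpa only [WithOne.coe_mul] using hu)⟩
          · rintro ⟨_, ⟨c, hcC, rfl⟩, u, hu⟩
            rw [coe_mul'] at hu
            obtain ⟨⟨s, hs⟩, ⟨t, ht⟩⟩ := (hC' (c * retr M u)).2 ⟨c, hcC, _, hc.1.refl _⟩
            exact ⟨⟨s, hc.1.trans hu hs⟩, ⟨t, hc.1.trans hu ht⟩⟩
    · induction a using wo_cases with
      | one => simpa only [one_mul] using hr
      | coe a =>
        simpa only [coe_mul'] using pull_fg (hM _ (restr_fg hr) a a).2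
  · intro hS r hr a b
    have hc := fg_cong hr
    obtain ⟨⟨C, hC⟩, hA⟩ := hS _ (pull_fg hr) a b
    have hC' := fun x => Set.ext_iff.1 hC x
    simp only [Set.mem_ofPred_eq, Set.mem_iUnion, exists_prop, map_mul, retr_coe] at hC'
    constructor
    · refine ⟨C.image (retr M), ?_⟩
      ext x
      simp only [Set.mem_ofPred_eq, Set.mem_iUnion, exists_prop, Finset.mem_image]
      constructor
      · rintro ⟨⟨s, hs⟩, ⟨t, ht⟩⟩
        obtain ⟨c, hcC, u, hu⟩ := (hC' x).1 ⟨⟨s, hs⟩, ⟨t, ht⟩⟩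
        exact ⟨_, ⟨c, hcC, rfl⟩, _, hu⟩
      · rintro ⟨_, ⟨c, hcC, rfl⟩, u, hu⟩
        obtain ⟨⟨s, hs⟩, ⟨t, ht⟩⟩ := (hC' x).2 ⟨c, hcC, u, hu⟩
        exact ⟨⟨_, hs⟩, ⟨_, ht⟩⟩
    · simpa only [map_mul, retr_coe] using restr_fg hA
end

section
/- Let S be a right coherent monoid and let J be a monoid 𝓙-class of S. Then J, regarded as a monoid under the multiplication of S, is right coherent. -/
theorem exists_rcong {M : Type*} [Monoid M] (H : Set (M × M)) :
    ∃ r : M → M → Prop, RCongGenBy H r := by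
  refine ⟨fun x y => ∀ r' : M → M → Prop, IsRightCongruence r' → (∀ p ∈ H, r' p.1 p.2) → r' x y,
    ⟨⟨fun x r' h _ => h.1.refl x, fun h r' h1 h2 => h1.1.symm (h r' h1 h2),
      fun h h' r' h1 h2 => h1.1.trans (h r' h1 h2) (h' r' h1 h2)⟩,
      fun a b c h r' h1 h2 => h1.2 _ _ _ (h r' h1 h2)⟩,
    fun p hp r' _ h2 => h2 p hp, fun r' h1 h2 x y h => h r' h1 h2⟩

theorem key_transfer {S N : Type*} [Monoid S] [Monoid N] (e : S) (φ : N → S)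
    (hinj : Function.Injective φ)
    (hmulφ : ∀ x y : N, φ (x * y) = φ x * φ y)
    (F : ∀ p t n, e * (p * t) = φ n → ∃ p' t', e * p = φ p' ∧ e * t = φ t' ∧ n = p' * t')
    (G : ∀ p t p' t', e * p = φ p' → e * t = φ t' → e * (p * t) = φ (p' * t'))
    (K : Set (S × S)) (ρ : S → S → Prop) (hρ : RCongGenBy K ρ)
    (σ : N → N → Prop) (hσ : IsRightCongruence σ)
    (h1 : ∀ k ∈ K, ∀ n, e * k.1 = φ n → ∃ m, e * k.2 = φ m ∧ σ n m)
    (h2 : ∀ k ∈ K, ∀ n, e * k.2 = φ n → ∃ m, e * k.1 = φ m ∧ σ n m)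
    (x y : S) (hxy : ρ x y) (n : N) (hn : e * x = φ n) :
    ∃ m, e * y = φ m ∧ σ n m := by
  have := hρ.2.2 (fun x y => ∀ t : S, (∀ n, e * (x * t) = φ n → ∃ m, e * (y * t) = φ m ∧ σ n m) ∧
    (∀ n, e * (y * t) = φ n → ∃ m, e * (x * t) = φ m ∧ σ n m)) ?_ ?_ x y hxy 1
  · simpa [hn] using this.1 n (by simpa using hn)
  · refine ⟨⟨?_, ?_, ?_⟩, ?_⟩
    · intro x t
      exact ⟨fun n h => ⟨n, h, hσ.1.refl _⟩, fun n h => ⟨n, h, hσ.1.refl _⟩⟩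
    · intro x y h t
      exact ⟨(h t).2, (h t).1⟩
    · intro x y z h h' t
      constructor
      · intro n hn
        obtain ⟨m, hm, h3⟩ := (h t).1 n hn
        obtain ⟨l, hl, h4⟩ := (h' t).1 m hm
        exact ⟨l, hl, hσ.1.trans h3 h4⟩
      · intro n hn
        obtain ⟨m, hm, h3⟩ := (h' t).2 n hn
        obtain ⟨l, hl, h4⟩ := (h t).2 m hm
        exact ⟨l, hl, hσ.1.trans h3 h4⟩
    · intro x y c h t
      simpa only [mul_assoc] using h (c * t)
  · intro k hk t
    constructor
    · intro n hn
      obtain ⟨p', t', hp, ht, rfl⟩ := F _ _ _ hn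
      obtain ⟨m, hm, h3⟩ := h1 k hk _ hp
      exact ⟨m * t', G _ _ _ _ hm ht, hσ.2 _ _ _ h3⟩
    · intro n hn
      obtain ⟨p', t', hp, ht, rfl⟩ := F _ _ _ hn
      obtain ⟨m, hm, h3⟩ := h2 k hk _ hp
      exact ⟨m * t', G _ _ _ _ hm ht, hσ.2 _ _ _ h3⟩

theorem stmt10 {S : Type*} [Monoid S] (hS : RightCoherent S)
    (J : Set S)
    (hclosed : ∀ a ∈ J, ∀ b ∈ J, a * b ∈ J)
    (e : S) (he : e ∈ J)
    (hel : ∀ a ∈ J, e * a = a) (her : ∀ a ∈ J, a * e = a)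
    (hJclass : ∀ a ∈ J, ∀ b : S,
      (b ∈ J ↔ ((∃ s t : S, b = s * a * t) ∧ (∃ s t : S, a = s * b * t))))
    (N : Type*) [Monoid N] (φ : N → S)
    (hinj : Function.Injective φ) (hrange : Set.range φ = J)
    (hmulφ : ∀ x y : N, φ (x * y) = φ x * φ y) (h1φ : φ 1 = e) :
    RightCoherent N := by
  classical
  have hJ : ∀ n, φ n ∈ J := fun n => hrange ▸ Set.mem_range_self n
  have heφ : ∀ n, e * φ n = φ n := fun n => hel _ (hJ n)
  have hφe : ∀ n, φ n * e = φ n := fun n => her _ (hJ n)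
  have F0 : ∀ n s t w, φ n = s * (e * t) * w → ∃ m, e * t = φ m := by
    intro n s t w h
    have : e * t ∈ J := by
      rw [hJclass e he]
      refine ⟨⟨1, t, by simp⟩, ?_⟩
      obtain ⟨s', t', h'⟩ := ((hJclass e he (φ n)).1 (hJ n)).2
      refine ⟨s' * s, w * t', ?_⟩
      rw [h] at h'
      simpa only [mul_assoc] using h'
    rw [← hrange] at this
    obtain ⟨m, hm⟩ := this
    exact ⟨m, hm.symm⟩
  have G : ∀ p t p' t', e * p = φ p' → e * t = φ t' → e * (p * t) = φ (p' * t') := by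
    intro p t p' t' hp ht
    rw [hmulφ, ← ht, ← mul_assoc, ← mul_assoc, hφe, hp]
  have F : ∀ p t n, e * (p * t) = φ n →
      ∃ p' t', e * p = φ p' ∧ e * t = φ t' ∧ n = p' * t' := by
    intro p t n h
    obtain ⟨p', hp⟩ := F0 n 1 p t (by rw [← h]; simp [mul_assoc])
    obtain ⟨t', ht⟩ := F0 n (e * p) t 1 (by
      rw [← h, mul_one, ← mul_assoc, ← mul_assoc, hp, hφe])
    exact ⟨p', t', hp, ht, hinj (by rw [← h, G _ _ _ _ hp ht])⟩
  rintro r ⟨H, hHf, hr⟩ a b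
  obtain ⟨ρ, hρ⟩ := exists_rcong ((Prod.map φ φ) '' H)
  have A : ∀ x y, ρ x y → ∀ n, e * x = φ n → ∃ m, e * y = φ m ∧ r n m := by
    intro x y hxy n hn
    refine key_transfer e φ hinj hmulφ F G _ ρ hρ r hr.1 ?_ ?_ x y hxy n hn
    · rintro _ ⟨⟨p, q⟩, hk, rfl⟩ n hn
      obtain rfl : p = n := hinj (by simpa [heφ] using hn)
      exact ⟨q, heφ q, hr.2.1 _ hk⟩
    · rintro _ ⟨⟨p, q⟩, hk, rfl⟩ n hn
      obtain rfl : q = n := hinj (by simpa [heφ] using hn)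
      exact ⟨p, heφ p, hr.1.1.symm (hr.2.1 _ hk)⟩
  have B : ∀ n m, r n m → ρ (φ n) (φ m) := by
    refine hr.2.2 (fun n m => ρ (φ n) (φ m)) ⟨⟨fun x => hρ.1.1.refl _, fun h => hρ.1.1.symm h,
      fun h h' => hρ.1.1.trans h h'⟩, fun a b c h => ?_⟩ ?_
    · simp only [hmulφ]
      exact hρ.1.2 _ _ _ h
    · intro p hp
      exact hρ.2.1 _ ⟨p, hp, rfl⟩
  obtain ⟨⟨C, hC⟩, K, hKf, hK⟩ := hS ρ ⟨_, hHf.image _, hρ⟩ (φ a) (φ b)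
  have D : ∀ (c x : N) (y z : S) (s : N), e * y = φ c → ρ y (φ x * z) →
      ∃ t, r (c * s) (x * t) := by
    intro c x y z s hy h
    obtain ⟨m, hm, h1⟩ := A _ _ h _ hy
    obtain ⟨p', t', hp, ht, rfl⟩ := F _ _ _ hm
    obtain rfl : x = p' := hinj (by rw [← hp, heφ])
    exact ⟨t' * s, by rw [← mul_assoc]; exact hr.1.2 _ _ _ h1⟩
  constructor
  · refine ⟨(C.image (e * ·)).preimage φ hinj.injOn, ?_⟩
    ext x
    simp only [Set.mem_setOf_eq, Set.mem_iUnion, Finset.mem_preimage, Finset.mem_image,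
      exists_prop]
    constructor
    · rintro ⟨⟨s, hs⟩, t, ht⟩
      have hx : φ x ∈ ⋃ c ∈ C, {x : S | ∃ s : S, ρ x (c * s)} := by
        rw [← hC]
        exact ⟨⟨φ s, hmulφ a s ▸ B _ _ hs⟩, φ t, hmulφ b t ▸ B _ _ ht⟩
      simp only [Set.mem_setOf_eq, Set.mem_iUnion, exists_prop] at hx
      obtain ⟨c, hc, u, hu⟩ := hx
      obtain ⟨m, hm, h1⟩ := A _ _ hu _ (heφ x)
      obtain ⟨p', t', hp, ht, rfl⟩ := F _ _ _ hm
      exact ⟨p', ⟨c, hc, hp⟩, t', h1⟩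
    · rintro ⟨n, ⟨c, hc, hn⟩, s, hs⟩
      have hx : c ∈ ⋃ c ∈ C, {x : S | ∃ s : S, ρ x (c * s)} := by
        simp only [Set.mem_setOf_eq, Set.mem_iUnion, exists_prop]
        exact ⟨c, hc, 1, by rw [mul_one]; exact hρ.1.1.refl _⟩
      rw [← hC] at hx
      obtain ⟨⟨u, hu⟩, v, hv⟩ := hx
      obtain ⟨t1, h1⟩ := D _ _ _ _ s hn hu
      obtain ⟨t2, h2⟩ := D _ _ _ _ s hn hv
      exact ⟨⟨t1, hr.1.1.trans hs h1⟩, t2, hr.1.1.trans hs h2⟩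
  · have E : ∀ p q, ρ (φ a * p) (φ a * q) → ∀ n, e * p = φ n →
        ∃ m, e * q = φ m ∧ r (a * n) (a * m) := by
      intro p q h n hn
      obtain ⟨m, hm, h1⟩ := A _ _ h _ (G _ _ _ _ (heφ a) hn)
      obtain ⟨p', t', hp, ht, rfl⟩ := F _ _ _ hm
      obtain rfl : a = p' := hinj (by rw [← hp, heφ])
      exact ⟨t', ht, h1⟩
    refine ⟨(Prod.map φ φ) ⁻¹' ((fun k : S × S => (e * k.1, e * k.2)) '' K),
      (hKf.image _).preimage (hinj.prodMap hinj).injOn, ?_, ?_, ?_⟩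
    · refine ⟨⟨fun x => hr.1.1.refl _, fun h => hr.1.1.symm h,
        fun h h' => hr.1.1.trans h h'⟩, fun x y c h => ?_⟩
      simp only [← mul_assoc]
      exact hr.1.2 _ _ _ h
    · rintro ⟨p, q⟩ ⟨⟨k, l⟩, hk, hkl⟩
      simp only [Prod.map_apply, Prod.mk.injEq] at hkl
      obtain ⟨m, hm, h1⟩ := E _ _ (hK.2.1 _ hk) _ hkl.1
      obtain rfl : q = m := hinj (by rw [← hm, ← hkl.2])
      exact h1
    · intro σ hσ hK' x y hxy
      have hxy' : ρ (φ a * φ x) (φ a * φ y) := by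
        rw [← hmulφ, ← hmulφ]
        exact B _ _ hxy
      obtain ⟨m, hm, h1⟩ := key_transfer e φ hinj hmulφ F G K _ hK σ hσ (by
          intro k hk n hn
          obtain ⟨m, hm, _⟩ := E _ _ (hK.2.1 _ hk) _ hn
          exact ⟨m, hm, hK' (n, m) ⟨k, hk, by simp [hn, hm]⟩⟩) (by
          intro k hk n hn
          obtain ⟨m, hm, _⟩ := E _ _ (hρ.1.1.symm (hK.2.1 _ hk)) _ hn
          exact ⟨m, hm, hσ.1.symm (hK' (m, n) ⟨k, hk, by simp [hn, hm]⟩)⟩)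
        (φ x) (φ y) hxy' x (heφ x)
      obtain rfl : y = m := hinj (by rw [← hm, heφ])
      exact h1
end
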